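/- Let G be a finite group, H a subgroup of G of index n ≥ 2, F a field of characteristic p > 0, and V an H-module of finite dimension a over F. Let K := core_G(H), let r ≠ p be a prime, let P_r be a Sylow r-subgroup of G, and let χ₁ be the number of orbits of K ∩ P_r on the nonzero elements of V. Then for every submodule S of the induced module V↑G = F[G] ⊗_{F[H]} V, d_G(S) ≤ min{a, χ₁}·n/n_r. -/

import Mathlib

/-- `dMod G S` is `d_G(S)`: the minimal number of elements required to generate the
(`G`-stable) submodule `S` as a `G`-module. -/
noncomputable def dMod (G : Type*) [Group G] {F W : Type*} [Field F] [AddCommGroup W]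
    [Module F W] [DistribMulAction G W] (S : Submodule F W) : ℕ :=
  sInf {m : ℕ | ∃ T : Finset W, T.card = m ∧ (T : Set W) ⊆ (S : Set W) ∧
    Submodule.span F {w : W | ∃ g : G, ∃ t ∈ T, w = g • t} = S}

open Subgroup in
/-- A Sylow `r`-subgroup meets a subgroup `L` in a subgroup whose relative index absorbs the whole
`r`-part of the index of `L`. -/
theorem Sylow.pow_factorization_index_dvd_relIndex {G : Type*} [Group G] [Finite G] {r : ℕ}
    [Fact r.Prime] (P : Sylow r G) (L : Subgroup G) :
    r ^ L.index.factorization r ∣ L.relIndex (P : Subgroup G) := by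
  have hmul : L.relIndex (P : Subgroup G) * (P : Subgroup G).index = (L ⊓ P).index := by
    rw [← inf_relIndex_right, relIndex_mul_index inf_le_right]
  have hdvd : r ^ L.index.factorization r ∣
      L.relIndex (P : Subgroup G) * (P : Subgroup G).index :=
    hmul ▸ (Nat.ordProj_dvd _ _).trans (index_dvd_of_le inf_le_left)
  have hcop : r.Coprime (P : Subgroup G).index :=
    (Fact.out : r.Prime).coprime_iff_not_dvd.mpr P.not_dvd_index
  exact (hcop.pow_left _).dvd_of_dvd_mul_right hdvd

open Subgroup in
theorem Sylow.relIndex_dvd_index_of_normal {G : Type*} [Group G] [Finite G] {r : ℕ}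
    (P : Sylow r G) (N : Subgroup G) [N.Normal] :
    (P : Subgroup G).relIndex N ∣ (P : Subgroup G).index := by
  obtain ⟨q, hq⟩ := N.relIndex_dvd_index_of_normal (P : Subgroup G)
  have hP : (P : Subgroup G).relIndex N * N.index = ((P : Subgroup G) ⊓ N).index := by
    rw [← inf_relIndex_right, relIndex_mul_index inf_le_right]
  have hN : N.relIndex (P : Subgroup G) * (P : Subgroup G).index =
      ((P : Subgroup G) ⊓ N).index := by
    rw [← inf_relIndex_left, relIndex_mul_index inf_le_left]
  have hpos : 0 < N.relIndex (P : Subgroup G) :=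
    Nat.pos_of_ne_zero fun h => by simp [h, N.index_ne_zero_of_finite] at hq
  refine ⟨q, Nat.eq_of_mul_eq_mul_left hpos ?_⟩
  rw [hN, ← hP, hq]
  ring

open Subgroup in
/-- Frattini argument: every coset of a normal subgroup `N` meets the normalizer of `N ⊓ P`. -/
theorem Sylow.exists_mul_mem_normalizer_inf {G : Type*} [Group G] [Finite G] {r : ℕ}
    [Fact r.Prime] (P : Sylow r G) (N : Subgroup G) [N.Normal] (g : G) :
    ∃ k ∈ N, g * k ∈ normalizer ((N ⊓ P : Subgroup G) : Set G) := by
  have hpg : IsPGroup r ((P : Subgroup G).subgroupOf N) :=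
    P.isPGroup'.comap_of_injective N.subtype N.subtype_injective
  have hnd : ¬ r ∣ ((P : Subgroup G).subgroupOf N).index := fun h =>
    P.not_dvd_index (h.trans (P.relIndex_dvd_index_of_normal N))
  have htop := (hpg.toSylow hnd).normalizer_sup_eq_top
  have hmap : ((hpg.toSylow hnd : Sylow r N) : Subgroup N).map N.subtype = N ⊓ P := by
    rw [IsPGroup.toSylow_coe, subgroupOf_map_subtype, inf_comm]
  rw [hmap] at htop
  obtain ⟨y, hy, k, hk, hyk⟩ := mem_sup_of_normal_right.mp (htop ▸ mem_top g)
  exact ⟨k⁻¹, N.inv_mem hk, by simpa [← hyk] using hy⟩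

/-- The number of orbits of a Sylow `r`-subgroup on `G ⧸ H` is at most the prime-to-`r` part of the
index of `H`. -/
theorem Sylow.card_orbits_quotient_le {G : Type*} [Group G] [Finite G] {r : ℕ}
    [Fact r.Prime] (P : Sylow r G) (H : Subgroup G) :
    Nat.card (MulAction.orbitRel.Quotient P (G ⧸ H)) ≤
      H.index / r ^ H.index.factorization r := by
  classical
  have hr : 0 < r := (Fact.out : r.Prime).pos
  have := Fintype.ofFinite (MulAction.orbitRel.Quotient P (G ⧸ H))
  rw [Nat.le_div_iff_mul_le (pow_pos hr _)]
  calc Nat.card (MulAction.orbitRel.Quotient P (G ⧸ H)) * r ^ H.index.factorization r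
      = ∑ _ω : MulAction.orbitRel.Quotient P (G ⧸ H), r ^ H.index.factorization r := by
        simp [Nat.card_eq_fintype_card]
    _ ≤ ∑ ω : MulAction.orbitRel.Quotient P (G ⧸ H), Nat.card ω.orbit := by
        refine Finset.sum_le_sum fun ω _ => ?_
        have horb : Nat.card ω.orbit =
            (MulAction.stabilizer G ω.out).relIndex (P : Subgroup G) := by
          rw [MulAction.orbitRel.Quotient.orbit_eq_orbit_out _ Quotient.out_eq,
            Nat.card_coe_set_eq, ← MulAction.index_stabilizer]
          rfl
        have hidx : (MulAction.stabilizer G ω.out).index = H.index := by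
          rw [MulAction.index_stabilizer_of_transitive]
          rfl
        rw [horb, ← hidx]
        exact Nat.le_of_dvd (Nat.pos_of_ne_zero Subgroup.index_ne_zero_of_finite)
          (P.pow_factorization_index_dvd_relIndex _)
    _ = Nat.card (G ⧸ H) := by
        rw [← Nat.card_sigma]
        exact (Nat.card_congr (MulAction.selfEquivSigmaOrbits' P (G ⧸ H))).symm
    _ = H.index := rfl

/-- Maschke's theorem for an action by linear maps: a stable submodule is the image of an
equivariant projection. -/
theorem Submodule.exists_equivariant_projection {P F W : Type*} [Group P] [Finite P] [Field F]
    [AddCommGroup W] [Module F W] [DistribMulAction P W] [SMulCommClass P F W]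
    (hP : (Nat.card P : F) ≠ 0) (S : Submodule F W) (hS : ∀ x : P, ∀ w ∈ S, x • w ∈ S) :
    ∃ π : W →ₗ[F] W, (∀ w, π w ∈ S) ∧ (∀ w ∈ S, π w = w) ∧
      ∀ (x : P) (w : W), π (x • w) = x • π w := by
  have := Fintype.ofFinite P
  obtain ⟨q, hq⟩ := S.subtype.exists_leftInverse_of_injective S.ker_subtype
  have hqS : ∀ w (hw : w ∈ S), (q w : W) = w := fun w hw =>
    congrArg Subtype.val (LinearMap.congr_fun hq ⟨w, hw⟩)
  let π : W →ₗ[F] W := (Nat.card P : F)⁻¹ • ∑ x : P, DistribSMul.toLinearMap F W x ∘ₗ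
    S.subtype ∘ₗ q ∘ₗ DistribSMul.toLinearMap F W x⁻¹
  have hπ : ∀ w, π w = (Nat.card P : F)⁻¹ • ∑ x : P, x • (q (x⁻¹ • w) : W) := fun w => by
    simp [π, LinearMap.sum_apply]
  refine ⟨π, fun w => ?_, fun w hw => ?_, fun x w => ?_⟩
  · rw [hπ]
    exact S.smul_mem _ (S.sum_mem fun x _ => hS x _ (q _).2)
  · rw [hπ, Finset.sum_congr rfl fun x _ => by rw [hqS _ (hS x⁻¹ w hw), smul_inv_smul],
      Finset.sum_const, Finset.card_univ, ← Nat.card_eq_fintype_card, ← Nat.cast_smul_eq_nsmul F,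
      inv_smul_smul₀ hP]
  · rw [hπ, hπ, smul_comm x, Finset.smul_sum (r := x)]
    congr 1
    refine Fintype.sum_equiv (Equiv.mulLeft x⁻¹) _ _ fun y => ?_
    simp [smul_smul]

/-- If the whole module is generated by `T` under a subgroup `P` of order invertible in `F`, then
every submodule needs at most `T.card` generators. -/
theorem dMod_le_card_of_span_eq_top {G F W : Type*} [Group G] [Finite G] [Field F]
    [AddCommGroup W] [Module F W] [DistribMulAction G W] [SMulCommClass G F W]
    (P : Subgroup G) (hP : (Nat.card P : F) ≠ 0) (S : Submodule F W)
    (hS : ∀ g : G, ∀ w ∈ S, g • w ∈ S) (T : Finset W)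
    (hT : Submodule.span F {w : W | ∃ x ∈ P, ∃ t ∈ T, w = x • t} = ⊤) :
    dMod G S ≤ T.card := by
  classical
  obtain ⟨π, hπS, hπid, hπ⟩ := S.exists_equivariant_projection (P := P) hP fun x => hS x
  refine le_trans (Nat.sInf_le ?_) (Finset.card_image_le (s := T) (f := π))
  refine ⟨T.image π, rfl, ?_, le_antisymm ?_ fun w hw => ?_⟩
  · intro w hw
    obtain ⟨t, -, rfl⟩ := Finset.mem_image.mp hw
    exact hπS t
  · rw [Submodule.span_le]
    rintro _ ⟨g, t, ht, rfl⟩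
    obtain ⟨u, -, rfl⟩ := Finset.mem_image.mp ht
    exact hS g _ (hπS u)
  · have hmem : π w ∈ (Submodule.span F {w : W | ∃ x ∈ P, ∃ t ∈ T, w = x • t}).map π :=
      Submodule.mem_map_of_mem (hT ▸ Submodule.mem_top)
    rw [hπid w hw, Submodule.map_span] at hmem
    refine Submodule.span_mono ?_ hmem
    rintro _ ⟨_, ⟨x, hx, t, ht, rfl⟩, rfl⟩
    exact ⟨x, π t, Finset.mem_image_of_mem π ht, hπ ⟨x, hx⟩ t⟩

/-- If `V` is generated by `T` under `core_G(H) ∩ P`, then the module induced from `V` is generated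
under `P` by at most `T.card` times the prime-to-`r` part of `[G : H]` elements. -/
theorem exists_finset_span_eq_top_of_induced {G F W : Type*} [Group G] [Finite G] [Field F]
    [AddCommGroup W] [Module F W] [DistribMulAction G W] [SMulCommClass G F W]
    (H : Subgroup G) (V : Submodule F W) (φ : G ⧸ H → Submodule F W)
    (hφ : ∀ g : G, φ (g : G ⧸ H) = V.map (DistribSMul.toLinearMap F W g))
    (hsup : iSup φ = ⊤) {r : ℕ} [Fact r.Prime] (P : Sylow r G) (T : Finset W)
    (hT : V ≤ Submodule.span F {w : W | ∃ x ∈ H.normalCore ⊓ (P : Subgroup G), ∃ t ∈ T,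
      w = x • t}) :
    ∃ U : Finset W, U.card ≤ T.card * (H.index / r ^ H.index.factorization r) ∧
      Submodule.span F {w : W | ∃ x ∈ (P : Subgroup G), ∃ t ∈ U, w = x • t} = ⊤ := by
  classical
  have hrep : ∀ c : G ⧸ H, ∃ g : G, (g : G ⧸ H) = c ∧
      g ∈ Subgroup.normalizer ((H.normalCore ⊓ P : Subgroup G) : Set G) := by
    intro c
    obtain ⟨g, rfl⟩ := QuotientGroup.mk_surjective c
    obtain ⟨k, hk, hgk⟩ := P.exists_mul_mem_normalizer_inf H.normalCore g
    exact ⟨g * k, QuotientGroup.mk_mul_of_mem g (H.normalCore_le hk), hgk⟩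
  choose rep hrep_mk hrep_norm using hrep
  have := Fintype.ofFinite (MulAction.orbitRel.Quotient P (G ⧸ H))
  let U : Finset W := Finset.univ.biUnion fun ω : MulAction.orbitRel.Quotient P (G ⧸ H) =>
    T.image (rep ω.out • ·)
  refine ⟨U, ?_, ?_⟩
  · refine (Finset.card_biUnion_le_card_mul _ _ T.card fun _ _ => Finset.card_image_le).trans ?_
    rw [mul_comm, Finset.card_univ, ← Nat.card_eq_fintype_card]
    exact Nat.mul_le_mul_left _ (P.card_orbits_quotient_le H)
  rw [eq_top_iff, ← hsup, iSup_le_iff]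
  intro c
  obtain ⟨y, hy⟩ : ∃ y : P, y • (Quotient.mk'' c : MulAction.orbitRel.Quotient P (G ⧸ H)).out = c :=
    MulAction.orbitRel_apply.mp
      ((MulAction.orbitRel P (G ⧸ H)).symm (Quotient.mk_out (s := MulAction.orbitRel P (G ⧸ H)) c))
  set ω : MulAction.orbitRel.Quotient P (G ⧸ H) := Quotient.mk'' c
  have hc : c = (((y : G) * rep ω.out : G) : G ⧸ H) := by
    rw [← smul_eq_mul, ← MulAction.Quotient.smul_coe, hrep_mk]
    exact hy.symm
  rw [hc, hφ, Submodule.map_le_iff_le_comap]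
  refine hT.trans (Submodule.span_le.mpr ?_)
  rintro _ ⟨x, hx, t, ht, rfl⟩
  have hconj := (Subgroup.mem_normalizer_iff.mp (hrep_norm ω.out) x).mp hx
  refine Submodule.subset_span ⟨y * (rep ω.out * x * (rep ω.out)⁻¹),
    mul_mem y.2 hconj.2, rep ω.out • t,
    Finset.mem_biUnion.mpr ⟨ω, Finset.mem_univ _, Finset.mem_image_of_mem _ ht⟩, ?_⟩
  simp [smul_smul, mul_assoc]

/-- A finite-dimensional `V` is generated by `finrank F V` elements. -/
theorem Submodule.exists_finset_card_le_finrank_le_span {F W : Type*} [Field F] [AddCommGroup W]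
    [Module F W] (V : Submodule F W) [FiniteDimensional F V] :
    ∃ T : Finset W, T.card ≤ Module.finrank F V ∧ V ≤ Submodule.span F (T : Set W) := by
  classical
  let b := Module.finBasis F V
  refine ⟨Finset.univ.image fun i => (b i : W), ?_, ?_⟩
  · simpa using Finset.card_image_le (s := Finset.univ) (f := fun i => (b i : W))
  · have hrange : ((Finset.univ.image fun i => (b i : W) : Finset W) : Set W) =
        V.subtype '' Set.range b := by
      ext w
      simp
    rw [hrange, ← Submodule.map_span, b.span_eq, Submodule.map_top, Submodule.range_subtype]

/-- A module is generated under `Q` by representatives of the `Q`-orbits of nonzero elements. -/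
theorem Submodule.exists_finset_card_le_card_orbits_le_span {G F W : Type*} [Group G] [Field F]
    [AddCommGroup W] [Module F W] [DistribMulAction G W] (V : Submodule F W) (Q : Subgroup G)
    (hfin : {s : Set W | ∃ v ∈ (V : Set W), v ≠ 0 ∧
      s = {w : W | ∃ g ∈ Q, g • v = w}}.Finite) :
    ∃ T : Finset W, T.card ≤ Nat.card {s : Set W | ∃ v ∈ (V : Set W), v ≠ 0 ∧
        s = {w : W | ∃ g ∈ Q, g • v = w}} ∧
      V ≤ Submodule.span F {w : W | ∃ x ∈ Q, ∃ t ∈ T, w = x • t} := by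
  classical
  have hne : ∀ s ∈ {s : Set W | ∃ v ∈ (V : Set W), v ≠ 0 ∧
      s = {w : W | ∃ g ∈ Q, g • v = w}}, ∃ t : W, s = {w : W | ∃ g ∈ Q, g • t = w} := by
    rintro s ⟨v, -, -, rfl⟩
    exact ⟨v, rfl⟩
  choose! t ht using hne
  refine ⟨hfin.toFinset.image t, ?_, fun v hv => ?_⟩
  · rw [Nat.card_coe_set_eq, Set.ncard_eq_toFinset_card _ hfin]
    exact Finset.card_image_le
  · rcases eq_or_ne v 0 with rfl | hv0
    · exact zero_mem _
    have hs : {w : W | ∃ g ∈ Q, g • v = w} ∈ {s : Set W | ∃ v ∈ (V : Set W), v ≠ 0 ∧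
        s = {w : W | ∃ g ∈ Q, g • v = w}} := ⟨v, hv, hv0, rfl⟩
    obtain ⟨g, hg, hgv⟩ : v ∈ {w : W | ∃ g ∈ Q, g • t {w : W | ∃ g ∈ Q, g • v = w} = w} :=
      ht _ hs ▸ ⟨1, Q.one_mem, one_smul G v⟩
    exact Submodule.subset_span ⟨g, hg, _,
      Finset.mem_image_of_mem t (hfin.mem_toFinset.mpr hs), hgv.symm⟩

/-- Let `G` be a finite group, `H ≤ G` of index `n ≥ 2`, `F` a field of characteristic
`p > 0`, and `V` an `H`-module of finite dimension `a` over `F`.  The induced module `V↑G` is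
presented internally: `W` is a `G`-module containing an `H`-stable subspace `V` of dimension
`a` such that `W` is the direct sum of the translates `g • V` over the cosets `g H ∈ G ⧸ H`.
Let `K = core_G H`, let `r ≠ p` be a prime, `P_r` a Sylow `r`-subgroup of `G`, and `χ₁` the
number of orbits of `K ∩ P_r` on the nonzero elements of `V`.  Then for every (`G`-stable)
submodule `S` of `W`, `d_G(S) ≤ min{a,χ₁}·n/n_r`; the bound with `min{a,χ₁}` replaced by `a`
holds without finiteness assumptions on the set of orbits. -/
theorem stmt_13 (G : Type*) [Group G] [Fintype G]
    (H : Subgroup G) (n : ℕ) (hn : 2 ≤ n) (hidx : H.index = n)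
    (F W : Type*) [Field F] (p : ℕ) [Fact p.Prime] (hchar : CharP F p)
    [AddCommGroup W] [Module F W] [DistribMulAction G W] [SMulCommClass G F W]
    (V : Submodule F W) [FiniteDimensional F V] (a : ℕ) (ha : Module.finrank F V = a)
    (hVstable : ∀ g ∈ H, ∀ v ∈ V, g • v ∈ V)
    (hinduced : ∃ φ : G ⧸ H → Submodule F W,
      (∀ g : G, φ (g : G ⧸ H) = V.map (DistribMulAction.toLinearMap F W g)) ∧
        iSupIndep φ ∧ iSup φ = ⊤)
    (r : ℕ) (hr : r.Prime) (hrp : r ≠ p) (Pr : Sylow r G)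
    (orbs : Set (Set W))
    (horbs : orbs = {s : Set W | ∃ v ∈ (V : Set W), v ≠ 0 ∧
      s = {w : W | ∃ g ∈ H.normalCore ⊓ (Pr : Subgroup G), g • v = w}})
    (χ₁ : ℕ) (hχ₁ : χ₁ = Nat.card orbs)
    (S : Submodule F W) (hSstable : ∀ g : G, ∀ w ∈ S, g • w ∈ S) :
    (orbs.Finite → dMod G S ≤ min a χ₁ * (n / r ^ n.factorization r)) ∧
      dMod G S ≤ a * (n / r ^ n.factorization r) := by
  have : Fact r.Prime := ⟨hr⟩
  obtain ⟨φ, hφ, -, hsup⟩ := hinduced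
  subst hidx ha hχ₁ horbs
  have hcard : (Nat.card (Pr : Subgroup G) : F) ≠ 0 := by
    obtain ⟨k, hk⟩ := IsPGroup.iff_card.mp Pr.isPGroup'
    rw [hk, Nat.cast_pow]
    refine pow_ne_zero _ fun h => hrp ?_
    exact ((Nat.prime_dvd_prime_iff_eq Fact.out hr).mp ((CharP.cast_eq_zero_iff F p r).mp h)).symm
  have key : ∀ T : Finset W, V ≤ Submodule.span F
      {w : W | ∃ x ∈ H.normalCore ⊓ (Pr : Subgroup G), ∃ t ∈ T, w = x • t} →
      dMod G S ≤ T.card * (H.index / r ^ H.index.factorization r) := by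
    intro T hT
    obtain ⟨U, hU, hspan⟩ := exists_finset_span_eq_top_of_induced H V φ hφ hsup Pr T hT
    exact (dMod_le_card_of_span_eq_top (Pr : Subgroup G) hcard S hSstable U hspan).trans hU
  have hdim : dMod G S ≤ Module.finrank F V * (H.index / r ^ H.index.factorization r) := by
    obtain ⟨T, hTcard, hT⟩ := V.exists_finset_card_le_finrank_le_span
    refine (key T (hT.trans (Submodule.span_mono fun t ht => ?_))).trans
      (Nat.mul_le_mul_right _ hTcard)
    exact ⟨1, one_mem _, t, ht, (one_smul G t).symm⟩
  refine ⟨fun hfin => ?_, hdim⟩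
  obtain ⟨T, hTcard, hT⟩ := V.exists_finset_card_le_card_orbits_le_span _ hfin
  rw [min_mul_of_nonneg _ _ (Nat.zero_le _)]
  exact le_min hdim ((key T hT).trans (Nat.mul_le_mul_right _ hTcard))
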